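/- Scalability of the uplink interference function: Under the C-RAN setup with h_k ≠ 0 and target rate R_k > 0 for each user k, for every nonnegative power vector p ∈ ℝ^K and every real α > 1, α · Γ_k(p) > Γ_k(α·p) for every k. -/

import Mathlib

open Finset Matrix ComplexOrder

noncomputable section

namespace CRAN

variable {M K : ℕ}

/-- The channel vector `h_k = (h_{1,k}, …, h_{M,k}) ∈ ℂ^M` of user `k`. -/
def chanVec (h : Fin M → Fin K → ℂ) (k : Fin K) : Fin M → ℂ := fun m => h m k

/-- Quantization noise diagonal matrix `Q(p) = Diag(q_1(p),…,q_M(p))` with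
`q_m(p) = (Σ_i p_i |h_{m,i}|² + σ²)/η_m` and `η_m = 2^{C_m} − 1`. -/
def Qmat (h : Fin M → Fin K → ℂ) (σ2 : ℝ) (C : Fin M → ℝ) (p : Fin K → ℝ) :
    Matrix (Fin M) (Fin M) ℂ :=
  Matrix.diagonal fun m =>
    (((∑ i, p i * ‖h m i‖ ^ 2 + σ2) / ((2 : ℝ) ^ (C m) - 1) : ℝ) : ℂ)

/-- Interference-plus-quantization-plus-noise covariance matrix
`Σ_{j≠k} p_j h_j h_jᴴ + Q(p) + σ² I` for user `k`. -/
def covMat (h : Fin M → Fin K → ℂ) (σ2 : ℝ) (C : Fin M → ℝ) (p : Fin K → ℝ)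
    (k : Fin K) : Matrix (Fin M) (Fin M) ℂ :=
  (∑ j ∈ univ.erase k, (p j : ℂ) • Matrix.vecMulVec (chanVec h j) (star (chanVec h j)))
    + Qmat h σ2 C p + (σ2 : ℂ) • 1

/-- The uplink interference function
`Γ_k(p) = (2^{R_k} − 1) / (h_kᴴ (Σ_{j≠k} p_j h_j h_jᴴ + Q(p) + σ²I)⁻¹ h_k)`,
where the (real, positive) denominator is taken as the real part of the quadratic
form. -/
def Gam (h : Fin M → Fin K → ℂ) (σ2 : ℝ) (C : Fin M → ℝ) (R : Fin K → ℝ)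
    (p : Fin K → ℝ) (k : Fin K) : ℝ :=
  ((2 : ℝ) ^ (R k) - 1) /
    (star (chanVec h k) ⬝ᵥ ((covMat h σ2 C p k)⁻¹ *ᵥ chanVec h k)).re

/-- Strict antitonicity of the inverse quadratic form, in terms of solutions. -/
lemma aux_lt {n : ℕ} {B D : Matrix (Fin n) (Fin n) ℂ} (hB : B.PosDef) (hD : D.PosDef)
    {v x y : Fin n → ℂ} (hv : v ≠ 0) (hx : B *ᵥ x = v) (hy : (B + D) *ᵥ y = v) :
    (star v ⬝ᵥ y).re < (star v ⬝ᵥ x).re := by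
  have hy0 : y ≠ 0 := by
    rintro rfl
    exact hv (by simpa using hy.symm)
  have h1 := hD.dotProduct_mulVec_pos hy0
  have h2 := hB.posSemidef.dotProduct_mulVec_nonneg (x - y)
  have hDy : D *ᵥ y = v - B *ᵥ y := by
    rw [← hy, Matrix.add_mulVec]; simp
  have hsv : star v = star x ᵥ* B := by
    rw [← hx, Matrix.star_mulVec, hB.isHermitian.eq]
  have e : star x ⬝ᵥ (B *ᵥ y) = star v ⬝ᵥ y := by
    rw [hsv, Matrix.dotProduct_mulVec]
  have e2 : star x ⬝ᵥ v = star v ⬝ᵥ x := by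
    rw [hsv, ← Matrix.dotProduct_mulVec, hx]
  have key : star v ⬝ᵥ x - star v ⬝ᵥ y
      = star y ⬝ᵥ (D *ᵥ y) + star (x - y) ⬝ᵥ (B *ᵥ (x - y)) := by
    rw [hDy, Matrix.mulVec_sub, hx, star_sub, sub_dotProduct, dotProduct_sub, dotProduct_sub,
      e, e2]
    ring
  have h3 : 0 < star v ⬝ᵥ x - star v ⬝ᵥ y := by
    rw [key]; exact add_pos_of_pos_of_nonneg h1 h2
  have h4 := (Complex.lt_def.1 h3).1
  simp only [Complex.zero_re, Complex.sub_re] at h4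
  linarith

lemma eta_pos {c : ℝ} (hc : 0 < c) : 0 < (2 : ℝ) ^ c - 1 := by
  have := Real.one_lt_rpow (x := 2) (by norm_num) hc
  linarith

lemma diag_posDef {n : ℕ} {d : Fin n → ℝ} (hd : ∀ i, 0 < d i) :
    (Matrix.diagonal fun i => ((d i : ℝ) : ℂ)).PosDef :=
  Matrix.PosDef.diagonal fun i => by exact_mod_cast hd i

lemma covMat_posDef (h : Fin M → Fin K → ℂ) (σ2 : ℝ) (hσ : 0 < σ2)
    (C : Fin M → ℝ) (hC : ∀ m, 0 < C m) (p : Fin K → ℝ) (hp : ∀ i, 0 ≤ p i) (k : Fin K) :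
    (covMat h σ2 C p k).PosDef := by
  unfold covMat
  apply Matrix.PosDef.add
  · apply Matrix.PosDef.posSemidef_add
    · apply Matrix.posSemidef_sum
      intro j _
      exact (Matrix.posSemidef_vecMulVec_self_star _).smul (by exact_mod_cast hp j)
    · apply diag_posDef
      intro m
      refine div_pos (add_pos_of_nonneg_of_pos ?_ hσ) (eta_pos (hC m))
      exact Finset.sum_nonneg fun i _ => mul_nonneg (hp i) (by positivity)
  · exact Matrix.PosDef.one.smul (by exact_mod_cast hσ)

lemma covMat_scale (h : Fin M → Fin K → ℂ) (σ2 : ℝ)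
    (C : Fin M → ℝ) (p : Fin K → ℝ) (α : ℝ) (k : Fin K) :
    (α : ℂ) • covMat h σ2 C p k = covMat h σ2 C (α • p) k +
      Matrix.diagonal fun m =>
        (((α - 1) * (σ2 / ((2 : ℝ) ^ (C m) - 1) + σ2) : ℝ) : ℂ) := by
  have hq : ∀ m, ∑ i, (α • p) i * ‖h m i‖ ^ 2 = α * ∑ i, p i * ‖h m i‖ ^ 2 := by
    intro m
    rw [Finset.mul_sum]
    exact Finset.sum_congr rfl fun i _ => by simp [mul_assoc]
  have hs : (α : ℂ) • (∑ j ∈ univ.erase k,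
      (p j : ℂ) • Matrix.vecMulVec (chanVec h j) (star (chanVec h j))) =
      ∑ j ∈ univ.erase k,
      (((α • p) j : ℝ) : ℂ) • Matrix.vecMulVec (chanVec h j) (star (chanVec h j)) := by
    rw [Finset.smul_sum]
    exact Finset.sum_congr rfl fun i _ => by
      rw [smul_smul, Pi.smul_apply, smul_eq_mul, Complex.ofReal_mul]
  unfold covMat
  rw [smul_add, smul_add, hs, add_assoc, add_assoc, add_assoc]
  congr 1
  unfold Qmat
  simp only [hq]
  ext i j
  by_cases hij : i = j
  · subst hij
    simp
    ring
  · simp [hij]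

/-- **Scalability of the uplink interference function.** Under the C-RAN setup with
`h_k ≠ 0` and target rates `R_k > 0`, for every nonnegative power vector `p` and every
real `α > 1`, `α · Γ_k(p) > Γ_k(α·p)` for every `k`. -/
theorem gamma_scalable (M K : ℕ) (h : Fin M → Fin K → ℂ) (σ2 : ℝ) (hσ : 0 < σ2)
    (C : Fin M → ℝ) (hC : ∀ m, 0 < C m) (R : Fin K → ℝ) (hR : ∀ k, 0 < R k)
    (hh : ∀ k, chanVec h k ≠ 0)
    (p : Fin K → ℝ) (hp : ∀ i, 0 ≤ p i) (α : ℝ) (hα : 1 < α) :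
    ∀ k, Gam h σ2 C R (α • p) k < α * Gam h σ2 C R p k := by
  intro k
  have hα0 : 0 < α := by linarith
  have hαc : (α : ℂ) ≠ 0 := by exact_mod_cast hα0.ne'
  have hA := covMat_posDef h σ2 hσ C hC p hp k
  have hB := covMat_posDef h σ2 hσ C hC (α • p)
    (fun i => by simpa using mul_nonneg hα0.le (hp i)) k
  have hD : (Matrix.diagonal fun m =>
        (((α - 1) * (σ2 / ((2 : ℝ) ^ (C m) - 1) + σ2) : ℝ) : ℂ)).PosDef :=
    diag_posDef fun m => mul_pos (by linarith) (add_pos (div_pos hσ (eta_pos (hC m))) hσ)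
  have hApos := (Complex.lt_def.1 (hA.inv.dotProduct_mulVec_pos (hh k))).1
  have uA := (Matrix.isUnit_iff_isUnit_det _).1 hA.isUnit
  have uB := (Matrix.isUnit_iff_isUnit_det _).1 hB.isUnit
  have key := aux_lt hB hD (hh k)
    (x := (covMat h σ2 C (α • p) k)⁻¹ *ᵥ chanVec h k)
    (y := (α : ℂ)⁻¹ • ((covMat h σ2 C p k)⁻¹ *ᵥ chanVec h k))
    (by rw [Matrix.mulVec_mulVec, Matrix.mul_nonsing_inv _ uB, Matrix.one_mulVec])
    (by rw [← covMat_scale, Matrix.mulVec_smul, Matrix.smul_mulVec, smul_smul,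
          inv_mul_cancel₀ hαc, one_smul, Matrix.mulVec_mulVec,
          Matrix.mul_nonsing_inv _ uA, Matrix.one_mulVec])
  rw [dotProduct_smul, smul_eq_mul, ← Complex.ofReal_inv, Complex.re_ofReal_mul] at key
  unfold Gam
  rw [Complex.zero_re] at hApos
  have hR' := eta_pos (hR k)
  set a := (star (chanVec h k) ⬝ᵥ ((covMat h σ2 C p k)⁻¹ *ᵥ chanVec h k)).re
  calc _ < ((2 : ℝ) ^ (R k) - 1) / (α⁻¹ * a) :=
        div_lt_div_of_pos_left hR' (by positivity) key
    _ = _ := by field_simp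

end CRAN
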